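/- (Ascent step for k = 2) In the Cholesky setting, Tr(𝛉𝚯) + ∂̄ Tr(θ₁θ₂) = ∂ Tr(2θ₂θ̄₁ + θ₂θ̄₂). -/

import Mathlib

/-- An abstract model of the Dolbeault double complex of `(p,q)`-forms on a complex
manifold: a bigraded associative `ℂ`-algebra `Ω = ⨁ Ω^{p,q}`, graded-commutative with
respect to total degree, with `ℂ`-linear operators `∂` (`pd`) and `∂̄` (`pdb`) of
bidegrees `(1,0)` and `(0,1)`, squaring to zero and anticommuting, satisfying the
graded Leibniz rule. -/
structure DolbeaultAlgebra (Ω : Type*) [Ring Ω] [Algebra ℂ Ω] where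
  /-- the `ℂ`-subspace of elements of bidegree `(p,q)` -/
  deg : ℕ → ℕ → Submodule ℂ Ω
  one_mem : (1 : Ω) ∈ deg 0 0
  mul_mem : ∀ {p q p' q'} {a b : Ω}, a ∈ deg p q → b ∈ deg p' q' →
    a * b ∈ deg (p + p') (q + q')
  gcomm : ∀ {p q p' q'} (a b : Ω), a ∈ deg p q → b ∈ deg p' q' →
    a * b = ((-1 : ℂ) ^ ((p + q) * (p' + q'))) • (b * a)
  /-- the operator `∂` -/
  pd : Ω →ₗ[ℂ] Ω
  /-- the operator `∂̄` -/
  pdb : Ω →ₗ[ℂ] Ω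
  pd_mem : ∀ {p q} {a : Ω}, a ∈ deg p q → pd a ∈ deg (p + 1) q
  pdb_mem : ∀ {p q} {a : Ω}, a ∈ deg p q → pdb a ∈ deg p (q + 1)
  pd_pd : ∀ a : Ω, pd (pd a) = 0
  pdb_pdb : ∀ a : Ω, pdb (pdb a) = 0
  pd_pdb : ∀ a : Ω, pd (pdb a) + pdb (pd a) = 0
  pd_leibniz : ∀ {p q} (a b : Ω), a ∈ deg p q →
    pd (a * b) = pd a * b + ((-1 : ℂ) ^ (p + q)) • (a * pd b)
  pdb_leibniz : ∀ {p q} (a b : Ω), a ∈ deg p q →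
    pdb (a * b) = pdb a * b + ((-1 : ℂ) ^ (p + q)) • (a * pdb b)

namespace DolbeaultAlgebra

variable {Ω : Type*} [Ring Ω] [Algebra ℂ Ω] {r : ℕ}

/-- the entrywise extension of `∂` to `r × r` matrices over `Ω` -/
def mpd (A : DolbeaultAlgebra Ω) (M : Matrix (Fin r) (Fin r) Ω) :
    Matrix (Fin r) (Fin r) Ω := M.map A.pd

/-- the entrywise extension of `∂̄` to `r × r` matrices over `Ω` -/
def mpdb (A : DolbeaultAlgebra Ω) (M : Matrix (Fin r) (Fin r) Ω) :
    Matrix (Fin r) (Fin r) Ω := M.map A.pdb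

/-- the assertion that all entries of a matrix lie in `Ω^{p,q}` -/
def MatDeg (A : DolbeaultAlgebra Ω) (p q : ℕ) (M : Matrix (Fin r) (Fin r) Ω) : Prop :=
  ∀ i j, M i j ∈ A.deg p q

end DolbeaultAlgebra

section Helpers
open Matrix

namespace DolbeaultAlgebra
variable {Ω : Type*} [Ring Ω] [Algebra ℂ Ω] {r : ℕ} (A : DolbeaultAlgebra Ω)

theorem MatDeg.mul' {A : DolbeaultAlgebra Ω} {p q p' q' : ℕ} {M N : Matrix (Fin r) (Fin r) Ω}
    (hM : A.MatDeg p q M) (hN : A.MatDeg p' q' N) : A.MatDeg (p + p') (q + q') (M * N) := by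
  intro i j
  rw [Matrix.mul_apply]
  exact Submodule.sum_mem _ fun k _ => A.mul_mem (hM i k) (hN k j)

theorem MatDeg.add' {A : DolbeaultAlgebra Ω} {p q : ℕ} {M N : Matrix (Fin r) (Fin r) Ω}
    (hM : A.MatDeg p q M) (hN : A.MatDeg p q N) : A.MatDeg p q (M + N) :=
  fun i j => Submodule.add_mem _ (hM i j) (hN i j)

theorem MatDeg.sub' {A : DolbeaultAlgebra Ω} {p q : ℕ} {M N : Matrix (Fin r) (Fin r) Ω}
    (hM : A.MatDeg p q M) (hN : A.MatDeg p q N) : A.MatDeg p q (M - N) :=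
  fun i j => Submodule.sub_mem _ (hM i j) (hN i j)

theorem MatDeg.pd' {A : DolbeaultAlgebra Ω} {p q : ℕ} {M : Matrix (Fin r) (Fin r) Ω}
    (hM : A.MatDeg p q M) : A.MatDeg (p + 1) q (A.mpd M) :=
  fun i j => A.pd_mem (hM i j)

theorem MatDeg.pdb' {A : DolbeaultAlgebra Ω} {p q : ℕ} {M : Matrix (Fin r) (Fin r) Ω}
    (hM : A.MatDeg p q M) : A.MatDeg p (q + 1) (A.mpdb M) :=
  fun i j => A.pdb_mem (hM i j)

theorem mpd_mul {p q : ℕ} (M N : Matrix (Fin r) (Fin r) Ω) (hM : A.MatDeg p q M) :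
    A.mpd (M * N) = A.mpd M * N + ((-1 : ℂ) ^ (p + q)) • (M * A.mpd N) := by
  ext i j
  simp only [mpd, Matrix.map_apply, Matrix.mul_apply, Matrix.add_apply, Matrix.smul_apply,
    map_sum, Finset.smul_sum, ← Finset.sum_add_distrib]
  exact Finset.sum_congr rfl fun k _ => A.pd_leibniz _ _ (hM i k)

theorem mpdb_mul {p q : ℕ} (M N : Matrix (Fin r) (Fin r) Ω) (hM : A.MatDeg p q M) :
    A.mpdb (M * N) = A.mpdb M * N + ((-1 : ℂ) ^ (p + q)) • (M * A.mpdb N) := by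
  ext i j
  simp only [mpdb, Matrix.map_apply, Matrix.mul_apply, Matrix.add_apply, Matrix.smul_apply,
    map_sum, Finset.smul_sum, ← Finset.sum_add_distrib]
  exact Finset.sum_congr rfl fun k _ => A.pdb_leibniz _ _ (hM i k)

theorem trace_gcomm {p q p' q' : ℕ} (M N : Matrix (Fin r) (Fin r) Ω)
    (hM : A.MatDeg p q M) (hN : A.MatDeg p' q' N) :
    trace (M * N) = ((-1 : ℂ) ^ ((p + q) * (p' + q'))) • trace (N * M) := by
  simp only [Matrix.trace, Matrix.diag, Matrix.mul_apply, Finset.smul_sum]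
  rw [Finset.sum_comm]
  exact Finset.sum_congr rfl fun k _ => Finset.sum_congr rfl fun l _ =>
    A.gcomm _ _ (hM l k) (hN k l)

theorem pd_one : A.pd 1 = 0 := by
  have := A.pd_leibniz 1 1 A.one_mem
  simpa using this

theorem pdb_one : A.pdb 1 = 0 := by
  have := A.pdb_leibniz 1 1 A.one_mem
  simpa using this

theorem mpd_one : A.mpd (1 : Matrix (Fin r) (Fin r) Ω) = 0 := by
  ext i j
  by_cases h : i = j <;> simp [mpd, Matrix.one_apply, h, A.pd_one]

theorem mpdb_one : A.mpdb (1 : Matrix (Fin r) (Fin r) Ω) = 0 := by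
  ext i j
  by_cases h : i = j <;> simp [mpdb, Matrix.one_apply, h, A.pdb_one]

theorem mpd_add (M N : Matrix (Fin r) (Fin r) Ω) : A.mpd (M + N) = A.mpd M + A.mpd N := by
  ext i j; simp [mpd]

theorem mpdb_add (M N : Matrix (Fin r) (Fin r) Ω) : A.mpdb (M + N) = A.mpdb M + A.mpdb N := by
  ext i j; simp [mpdb]

theorem mpd_mpd (M : Matrix (Fin r) (Fin r) Ω) : A.mpd (A.mpd M) = 0 := by
  ext i j; simp [mpd, A.pd_pd]

theorem mpd_mpdb (M : Matrix (Fin r) (Fin r) Ω) : A.mpd (A.mpdb M) = - A.mpdb (A.mpd M) := by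
  ext i j
  simpa [mpd, mpdb] using eq_neg_of_add_eq_zero_left (A.pd_pdb (M i j))

theorem pd_trace (M : Matrix (Fin r) (Fin r) Ω) : A.pd (trace M) = trace (A.mpd M) := by
  simp [Matrix.trace, mpd]

theorem pdb_trace (M : Matrix (Fin r) (Fin r) Ω) : A.pdb (trace M) = trace (A.mpdb M) := by
  simp [Matrix.trace, mpdb]

/-- derivative of an inverse -/
theorem mpd_inv {b bi : Matrix (Fin r) (Fin r) Ω} (hb : A.MatDeg 0 0 bi)
    (h1 : bi * b = 1) (h2 : b * bi = 1) : A.mpd bi = - (bi * A.mpd b * bi) := by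
  have h := A.mpd_mul bi b hb
  rw [h1, mpd_one] at h
  simp only [add_zero, pow_zero, one_smul] at h
  have hkey : A.mpd bi * b = -(bi * A.mpd b) := eq_neg_of_add_eq_zero_left h.symm
  calc A.mpd bi = A.mpd bi * b * bi := by rw [mul_assoc, h2, mul_one]
    _ = _ := by rw [hkey, neg_mul]

theorem mpdb_inv {b bi : Matrix (Fin r) (Fin r) Ω} (hb : A.MatDeg 0 0 bi)
    (h1 : bi * b = 1) (h2 : b * bi = 1) : A.mpdb bi = - (bi * A.mpdb b * bi) := by
  have h := A.mpdb_mul bi b hb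
  rw [h1, mpdb_one] at h
  simp only [add_zero, pow_zero, one_smul] at h
  have hkey : A.mpdb bi * b = -(bi * A.mpdb b) := eq_neg_of_add_eq_zero_left h.symm
  calc A.mpdb bi = A.mpdb bi * b * bi := by rw [mul_assoc, h2, mul_one]
    _ = _ := by rw [hkey, neg_mul]

/-- the inverse of a unipotent upper triangular matrix is upper triangular -/
theorem upper_inv {b bi : Matrix (Fin r) (Fin r) Ω}
    (hbu : ∀ i j : Fin r, j < i → b i j = 0) (hbd : ∀ i : Fin r, b i i = 1)
    (h1 : bi * b = 1) : ∀ j i : Fin r, j < i → bi i j = 0 := by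
  intro j
  induction j using WellFoundedLT.induction with
  | ind j ih =>
    intro i hij
    have h := congrFun (congrFun h1 i) j
    rw [Matrix.one_apply_ne hij.ne', Matrix.mul_apply, Finset.sum_eq_single j] at h
    · simpa [hbd] using h
    · intro k _ hk
      rcases lt_or_gt_of_ne hk with hk | hk
      · rw [ih k hk i (hk.trans hij), zero_mul]
      · rw [hbu k j hk, mul_zero]
    · simp

/-- the inverse of a lower triangular matrix over degree zero is lower triangular -/
theorem lower_inv {c ci : Matrix (Fin r) (Fin r) Ω}
    (hc : A.MatDeg 0 0 c) (hci : A.MatDeg 0 0 ci)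
    (hcl : ∀ i j : Fin r, i < j → c i j = 0)
    (h1 : ci * c = 1) : ∀ j i : Fin r, i < j → ci i j = 0 := by
  intro j
  induction j using WellFoundedGT.induction with
  | ind j ih =>
    have key : ∀ i, i ≤ j → ci i j * c j j = (1 : Matrix (Fin r) (Fin r) Ω) i j := by
      intro i hij
      have h := congrFun (congrFun h1 i) j
      rw [Matrix.mul_apply, Finset.sum_eq_single j] at h
      · exact h
      · intro k _ hk
        rcases lt_or_gt_of_ne hk with hk | hk
        · rw [hcl k j hk, mul_zero]
        · rw [ih k hk i (hij.trans_lt hk), zero_mul]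
      · simp
    have hj := key j le_rfl
    rw [Matrix.one_apply_eq, A.gcomm _ _ (hci j j) (hc j j)] at hj
    simp only [add_zero, mul_zero, pow_zero, one_smul] at hj
    intro i hij
    have hi := key i hij.le
    rw [Matrix.one_apply_ne hij.ne] at hi
    calc ci i j = ci i j * c j j * ci j j := by rw [mul_assoc, hj, mul_one]
      _ = 0 := by rw [hi, zero_mul]

/-- strictly upper times upper is strictly upper -/
theorem su_mul {M N : Matrix (Fin r) (Fin r) Ω} (hM : ∀ i j : Fin r, j ≤ i → M i j = 0)
    (hN : ∀ i j : Fin r, j < i → N i j = 0) : ∀ i j : Fin r, j ≤ i → (M * N) i j = 0 := by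
  intro i j hij
  rw [Matrix.mul_apply]
  refine Finset.sum_eq_zero fun k _ => ?_
  rcases le_or_gt k i with hk | hk
  · rw [hM i k hk, zero_mul]
  · rw [hN k j (hij.trans_lt hk), mul_zero]

theorem trace_su {M : Matrix (Fin r) (Fin r) Ω} (hM : ∀ i j : Fin r, j ≤ i → M i j = 0) :
    trace M = 0 := Finset.sum_eq_zero fun i _ => hM i i le_rfl

theorem low_mul {M N : Matrix (Fin r) (Fin r) Ω} (hM : ∀ i j : Fin r, i < j → M i j = 0)
    (hN : ∀ i j : Fin r, i < j → N i j = 0) :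
    (∀ i j : Fin r, i < j → (M * N) i j = 0) ∧ ∀ i, (M * N) i i = M i i * N i i := by
  constructor
  · intro i j hij
    rw [Matrix.mul_apply]
    refine Finset.sum_eq_zero fun k _ => ?_
    rcases le_or_gt k i with hk | hk
    · rw [hN k j (hk.trans_lt hij), mul_zero]
    · rw [hM i k hk, zero_mul]
  · intro i
    rw [Matrix.mul_apply, Finset.sum_eq_single i]
    · intro k _ hk
      rcases lt_or_gt_of_ne hk with hk | hk
      · rw [hN k i hk, mul_zero]
      · rw [hM i k hk, zero_mul]
    · simp

theorem odd_sq {x : Ω} (hx : x ∈ A.deg 1 0) : x * x = 0 := by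
  have h := A.gcomm x x hx hx
  simp only [add_zero, mul_one, pow_one, neg_smul, one_smul] at h
  have h2 : (2 : ℂ) • (x * x) = 0 := by
    rw [two_smul]; nth_rewrite 1 [h]; simp
  exact (smul_eq_zero.mp h2).resolve_left two_ne_zero

end DolbeaultAlgebra
end Helpers

variable {Ω : Type*} [Ring Ω] [Algebra ℂ Ω]

/-- (Ascent step for `k = 2`) In the Cholesky setting,
`Tr(BθBΘ) + ∂̄Tr(θ₁θ₂) = ∂Tr(2θ₂θ̄₁ + θ₂θ̄₂)`. -/
theorem stmt15
    (A : DolbeaultAlgebra Ω) (r : ℕ) (hr : 1 ≤ r)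
    (b c binv cinv : Matrix (Fin r) (Fin r) Ω)
    (hbdeg : A.MatDeg 0 0 b) (hcdeg : A.MatDeg 0 0 c)
    (hbinvdeg : A.MatDeg 0 0 binv) (hcinvdeg : A.MatDeg 0 0 cinv)
    (hbu : ∀ i j : Fin r, j < i → b i j = 0) (hbd : ∀ i : Fin r, b i i = 1)
    (hcl : ∀ i j : Fin r, i < j → c i j = 0)
    (hbinvl : binv * b = 1) (hbinvr : b * binv = 1)
    (hcinvl : cinv * c = 1) (hcinvr : c * cinv = 1)
    (h hinv : Matrix (Fin r) (Fin r) Ω) (hh : h = c * b) (hhinv : hinv = binv * cinv)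
    (θ₁ θ₂ θ θb₁ θb₂ θb : Matrix (Fin r) (Fin r) Ω)
    (hθ₁ : θ₁ = A.mpd b * binv) (hθ₂ : θ₂ = cinv * A.mpd c) (hθ : θ = θ₁ + θ₂)
    (hθb₁ : θb₁ = A.mpdb b * binv) (hθb₂ : θb₂ = cinv * A.mpdb c) (hθb : θb = θb₁ + θb₂)
    (Bθ Bθb BΘ : Matrix (Fin r) (Fin r) Ω)
    (hBθ : Bθ = hinv * A.mpd h) (hBθb : Bθb = hinv * A.mpdb h) (hBΘ : BΘ = A.mpdb Bθ) :
    Matrix.trace (Bθ * BΘ) + A.pdb (Matrix.trace (θ₁ * θ₂)) =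
      A.pd (Matrix.trace ((2 : ℂ) • (θ₂ * θb₁) + θ₂ * θb₂)) := by
  have hβd : A.MatDeg 1 0 θ₁ := by rw [hθ₁]; exact hbdeg.pd'.mul' hbinvdeg
  have hγd : A.MatDeg 1 0 θ₂ := by rw [hθ₂]; exact hcinvdeg.mul' hcdeg.pd'
  have hβbd : A.MatDeg 0 1 θb₁ := by rw [hθb₁]; exact hbdeg.pdb'.mul' hbinvdeg
  have hγbd : A.MatDeg 0 1 θb₂ := by rw [hθb₂]; exact hcinvdeg.mul' hcdeg.pdb'
  have hθd : A.MatDeg 1 0 θ := by rw [hθ]; exact hβd.add' hγd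
  -- Maurer-Cartan type relations
  have hdib := A.mpd_inv hbinvdeg hbinvl hbinvr
  have hdbib := A.mpdb_inv hbinvdeg hbinvl hbinvr
  have hdic := A.mpd_inv hcinvdeg hcinvl hcinvr
  have hdbic := A.mpdb_inv hcinvdeg hcinvl hcinvr
  have mcγ : A.mpd θ₂ = -(θ₂ * θ₂) := by
    rw [hθ₂, A.mpd_mul _ _ hcinvdeg, A.mpd_mpd, hdic]
    simp [mul_assoc]
  have mcβb : A.mpd θb₁ = - A.mpdb θ₁ + θ₁ * θb₁ + θb₁ * θ₁ := by
    rw [hθ₁, hθb₁, A.mpd_mul _ _ hbdeg.pdb', A.mpdb_mul _ _ hbdeg.pd', A.mpd_mpdb, hdib, hdbib]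
    simp [mul_assoc]
  have mcγb : A.mpd θb₂ = - A.mpdb θ₂ - θ₂ * θb₂ - θb₂ * θ₂ := by
    rw [hθ₂, hθb₂, A.mpd_mul _ _ hcinvdeg, A.mpdb_mul _ _ hcinvdeg, A.mpd_mpdb, hdic, hdbic]
    simp [mul_assoc]
    abel
  -- the curvature
  have e1 : Bθ = binv * (θ * b) := by
    have hx : cinv * (A.mpd c * b) = θ₂ * b := by rw [hθ₂, mul_assoc]
    have hy : cinv * (c * A.mpd b) = θ₁ * b := by
      rw [hθ₁, ← mul_assoc, hcinvl, one_mul, mul_assoc, hbinvl, mul_one]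
    rw [hBθ, hh, hhinv, A.mpd_mul _ _ hcdeg, hθ]
    simp only [add_zero, pow_zero, one_smul]
    rw [mul_assoc, mul_add, hx, hy, add_mul, add_comm]
  have hbb : A.mpdb b = θb₁ * b := by rw [hθb₁, mul_assoc, hbinvl, mul_one]
  have hbi : A.mpdb binv = - (binv * θb₁) := by rw [hdbib, hθb₁, mul_assoc]
  set X := A.mpdb θ - θb₁ * θ - θ * θb₁ with hX
  have e2 : BΘ = binv * (X * b) := by
    rw [hBΘ, e1, A.mpdb_mul _ _ hbinvdeg, A.mpdb_mul _ _ hθd, hbi, hbb, hX]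
    simp only [add_zero, pow_zero, one_smul, pow_one, neg_smul]
    noncomm_ring
  have hXd : A.MatDeg 1 1 X := (hθd.pdb'.sub' (hβbd.mul' hθd)).sub' (hθd.mul' hβbd)
  have e3 : Matrix.trace (Bθ * BΘ) = Matrix.trace (θ * X) := by
    have : Bθ * BΘ = binv * (θ * X * b) := by
      rw [e1, e2]
      calc binv * (θ * b) * (binv * (X * b)) = binv * (θ * (b * binv) * (X * b)) := by
            simp only [mul_assoc]
        _ = _ := by rw [hbinvr]; simp only [mul_assoc, one_mul]
    rw [this, A.trace_gcomm _ _ hbinvdeg ((hθd.mul' hXd).mul' hbdeg), mul_assoc, hbinvr]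
    simp
  -- triangularity
  have hbiu := DolbeaultAlgebra.upper_inv hbu hbd hbinvl
  have hcil := A.lower_inv hcdeg hcinvdeg hcl hcinvl
  have sβ : ∀ i j : Fin r, j ≤ i → θ₁ i j = 0 := by
    rw [hθ₁]
    refine DolbeaultAlgebra.su_mul ?_ fun i j hij => hbiu j i hij
    intro i j hij
    rcases hij.lt_or_eq with hij | rfl
    · simp [DolbeaultAlgebra.mpd, hbu i j hij]
    · simp [DolbeaultAlgebra.mpd, hbd, A.pd_one]
  have sβb : ∀ i j : Fin r, j ≤ i → θb₁ i j = 0 := by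
    rw [hθb₁]
    refine DolbeaultAlgebra.su_mul ?_ fun i j hij => hbiu j i hij
    intro i j hij
    rcases hij.lt_or_eq with hij | rfl
    · simp [DolbeaultAlgebra.mpdb, hbu i j hij]
    · simp [DolbeaultAlgebra.mpdb, hbd, A.pdb_one]
  have sdβ : ∀ i j : Fin r, j ≤ i → A.mpdb θ₁ i j = 0 := by
    intro i j hij
    simp [DolbeaultAlgebra.mpdb, sβ i j hij]
  have lγ : ∀ i j : Fin r, i < j → θ₂ i j = 0 := by
    rw [hθ₂]
    refine (DolbeaultAlgebra.low_mul (fun i j hij => hcil j i hij) ?_).1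
    intro i j hij
    simp [DolbeaultAlgebra.mpd, hcl i j hij]
  have lγb : ∀ i j : Fin r, i < j → θb₂ i j = 0 := by
    rw [hθb₂]
    refine (DolbeaultAlgebra.low_mul (fun i j hij => hcil j i hij) ?_).1
    intro i j hij
    simp [DolbeaultAlgebra.mpdb, hcl i j hij]
  have t1 : Matrix.trace (θ₁ * A.mpdb θ₁) = 0 :=
    DolbeaultAlgebra.trace_su (DolbeaultAlgebra.su_mul sβ fun i j hij => sdβ i j hij.le)
  have t2 : Matrix.trace (θ₁ * θ₁ * θb₁) = 0 :=
    DolbeaultAlgebra.trace_su (DolbeaultAlgebra.su_mul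
      (DolbeaultAlgebra.su_mul sβ fun i j hij => sβ i j hij.le) fun i j hij => sβb i j hij.le)
  have t3 : Matrix.trace (θ₂ * θ₂ * θb₂) = 0 := by
    refine Finset.sum_eq_zero fun i _ => ?_
    have h1 := DolbeaultAlgebra.low_mul lγ lγ
    rw [Matrix.diag_apply, (DolbeaultAlgebra.low_mul h1.1 lγb).2, h1.2, A.odd_sq (hγd i i),
      zero_mul]
  -- cyclicity
  have c3 : ∀ {M N P : Matrix (Fin r) (Fin r) Ω}, A.MatDeg 1 0 M → A.MatDeg 1 0 N →
      A.MatDeg 0 1 P → Matrix.trace (M * (P * N)) = Matrix.trace (N * M * P) := by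
    intro M N P hM hN hP
    rw [← mul_assoc, A.trace_gcomm _ _ (hM.mul' hP) hN, mul_assoc]
    simp
  have q1 := c3 hθd hθd hβbd
  have q2 := c3 hγd hβd hβbd
  have q3 := c3 hγd hγd hγbd
  have q4 : Matrix.trace (A.mpdb θ₁ * θ₂) = Matrix.trace (θ₂ * A.mpdb θ₁) := by
    rw [A.trace_gcomm _ _ hβd.pdb' hγd]; simp
  rw [e3, A.pdb_trace, A.pd_trace, A.mpdb_mul _ _ hβd, two_smul, A.mpd_add, A.mpd_add,
    A.mpd_mul _ _ hγd, A.mpd_mul _ _ hγd, mcγ, mcβb, mcγb, hX, mul_sub, mul_sub,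
    Matrix.trace_sub, Matrix.trace_sub, q1, hθ, A.mpdb_add]
  simp only [add_zero, pow_one, neg_smul, one_smul, add_mul, mul_add, mul_sub, mul_neg, neg_mul,
    Matrix.trace_add, Matrix.trace_neg, Matrix.trace_sub, ← mul_assoc, t1, t2, q4]
  simp only [← mul_assoc] at q2 q3
  rw [q2, q3, t3]
  abel
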